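/- arXiv:2103.12684 — 2 statements merged into one kernel-verified Lean document; each statement's English description precedes it below -/
import Mathlib

section
/- Let μ and ν be probability measures on ℝ^d and let y > 0. Then ‖ μ * ν * (∂n_y/∂y) ‖₁ ≤ ‖ ν * (∂n_y/∂y) ‖₁. Moreover, ∫_{ℝ^d} | (∂/∂y) n_y(x) | dx = (1/y) · (2/Γ(d/2)) · (d/(2e))^{d/2}, so in particular ‖ μ * (∂n_y/∂y) ‖₁ ≤ (1/y) · (2/Γ(d/2)) · (d/(2e))^{d/2}. -/
open MeasureTheory Real

/-- Density of the centered Gaussian on `ℝ^d` with covariance matrix `y • I`. -/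
noncomputable def gaussD (d : ℕ) (y : ℝ) (x : EuclideanSpace ℝ (Fin d)) : ℝ :=
  (2 * Real.pi * y) ^ (-(d : ℝ) / 2) * Real.exp (-‖x‖ ^ 2 / (2 * y))

/-- `∂/∂y n_y (x)`. -/
noncomputable def gaussDy (d : ℕ) (y : ℝ) (x : EuclideanSpace ℝ (Fin d)) : ℝ :=
  deriv (fun u => gaussD d u x) y

/-!
Averaging translates of an integrable function against a finite measure `μ` multiplies its `L¹` norm
by at most the mass of `μ`; the convolution inequalities follow from this and associativity.

For the norm itself, write `n_y(x) = g(‖x‖)`. The scaling `n_y(x) = y ^ (-d/2) n_1(x / √y)` gives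
`2 y ∂n_y/∂y = -div (x n_y)`, that is, `2 y r ^ (d - 1) ∂g/∂y = -∂(r ^ d g)/∂r`. Hence the radial
integral of `|∂n_y/∂y|` is `1 / (2 y)` times the total variation of `r ^ d g(r)` on `(0, ∞)`. This
function rises from `0` to its maximum at `r = √(d y)` and decays back to `0`, so its total
variation is twice its maximum `(d / (2 π e)) ^ (d / 2)`. Multiplying by the area
`2 π ^ (d / 2) / Γ(d / 2)` of the unit sphere yields the constant.
-/

open Filter Module Set Topology

section Translates

variable {G E : Type*} [MeasurableSpace G] [NormedAddCommGroup E] [NormedSpace ℝ E]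
  {l : Measure G} [SFinite l] {f : G → E}

section AddGroup

variable [AddGroup G] [MeasurableAdd₂ G] [MeasurableNeg G] [l.IsAddRightInvariant]

lemma integrable_prod_comp_sub (hf : Integrable f l) (μ : Measure G) [IsFiniteMeasure μ] :
    Integrable (fun p : G × G => f (p.1 - p.2)) (l.prod μ) := by
  simpa using (integrable_const (μ := μ) (1 : ℝ)).convolution_integrand
    (ContinuousLinearMap.lsmul ℝ ℝ) hf

lemma integral_norm_integral_comp_sub_le (hf : Integrable f l) (μ : Measure G)
    [IsFiniteMeasure μ] :
    ∫ x, ‖∫ z, f (x - z) ∂μ‖ ∂l ≤ μ.real univ * ∫ x, ‖f x‖ ∂l := by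
  have hint := integrable_prod_comp_sub hf μ
  calc ∫ x, ‖∫ z, f (x - z) ∂μ‖ ∂l
      ≤ ∫ x, ∫ z, ‖f (x - z)‖ ∂μ ∂l :=
        integral_mono hint.integral_prod_left.norm hint.norm.integral_prod_left
          fun _ => norm_integral_le_integral_norm _
    _ = μ.real univ * ∫ x, ‖f x‖ ∂l := by
        simpa [convolution] using integral_convolution (ContinuousLinearMap.mul ℝ ℝ)
          (integrable_const (μ := μ) (1 : ℝ)) hf.norm

end AddGroup

variable [AddCommGroup G] [MeasurableAdd₂ G] [MeasurableNeg G] [l.IsAddRightInvariant]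

lemma integral_comp_sub_conv_ae_eq (hf : Integrable f l) (μ ν : Measure G) [IsFiniteMeasure μ]
    [IsFiniteMeasure ν] :
    (fun x => ∫ z, f (x - z) ∂(μ ∗ ν)) =ᵐ[l] fun x => ∫ w, ∫ z, f (x - w - z) ∂ν ∂μ := by
  filter_upwards [(integrable_prod_comp_sub hf (μ ∗ ν)).prod_right_ae] with x hx
  simp only [integral_conv hx, sub_add_eq_sub_sub]

lemma integral_norm_integral_comp_sub_conv_le (hf : Integrable f l) (μ ν : Measure G)
    [IsFiniteMeasure μ] [IsFiniteMeasure ν] :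
    ∫ x, ‖∫ z, f (x - z) ∂(μ ∗ ν)‖ ∂l ≤ μ.real univ * ∫ x, ‖∫ z, f (x - z) ∂ν‖ ∂l := by
  calc ∫ x, ‖∫ z, f (x - z) ∂(μ ∗ ν)‖ ∂l
      = ∫ x, ‖∫ w, ∫ z, f (x - w - z) ∂ν ∂μ‖ ∂l :=
        integral_congr_ae ((integral_comp_sub_conv_ae_eq hf μ ν).fun_comp norm)
    _ ≤ μ.real univ * ∫ x, ‖∫ z, f (x - z) ∂ν‖ ∂l :=
        integral_norm_integral_comp_sub_le (integrable_prod_comp_sub hf ν).integral_prod_left μ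

end Translates

section TotalVariation

variable {F F' : ℝ → ℝ} {a b m : ℝ}

lemma integrableOn_Ioi_deriv_of_nonpos_of_nonneg (hab : a ≤ b)
    (hF : ∀ r ∈ Ici a, HasDerivAt F (F' r) r) (hdec : ∀ r ∈ Ioo a b, F' r ≤ 0)
    (hinc : ∀ r ∈ Ioi b, 0 ≤ F' r) (hlim : Tendsto F atTop (𝓝 m)) :
    IntegrableOn F' (Ioi a) := by
  have hleft : IntegrableOn (-F') (Ioc a b) := intervalIntegral.integrableOn_deriv_of_nonneg
    (fun r hr => (hF r hr.1).neg.continuousAt.continuousWithinAt) (fun r hr => (hF r hr.1.le).neg)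
    (fun r hr => neg_nonneg.2 (hdec r hr))
  have hright : IntegrableOn F' (Ioi b) :=
    integrableOn_Ioi_deriv_of_nonneg' (fun r hr => hF r (hab.trans hr)) hinc hlim
  exact Ioc_union_Ioi_eq_Ioi hab ▸ IntegrableOn.union (integrable_neg_iff.1 hleft) hright

lemma integral_Ioi_abs_deriv_of_nonpos_of_nonneg (hab : a ≤ b)
    (hF : ∀ r ∈ Ici a, HasDerivAt F (F' r) r) (hdec : ∀ r ∈ Ioo a b, F' r ≤ 0)
    (hinc : ∀ r ∈ Ioi b, 0 ≤ F' r) (hlim : Tendsto F atTop (𝓝 m)) :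
    ∫ r in Ioi a, |F' r| = (F a - F b) + (m - F b) := by
  have hint := integrableOn_Ioi_deriv_of_nonpos_of_nonneg hab hF hdec hinc hlim
  have hint_left : IntegrableOn F' (Ioc a b) := hint.mono_set Ioc_subset_Ioi_self
  have hint_right : IntegrableOn F' (Ioi b) := hint.mono_set (Ioi_subset_Ioi hab)
  have hleft : ∫ r in Ioc a b, |F' r| = F a - F b := by
    rw [integral_Ioc_eq_integral_Ioo,
      setIntegral_congr_fun measurableSet_Ioo fun r hr => abs_of_nonpos (hdec r hr), integral_neg,
      ← integral_Ioc_eq_integral_Ioo, ← intervalIntegral.integral_of_le hab,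
      intervalIntegral.integral_eq_sub_of_hasDerivAt_of_le hab
        (fun r hr => (hF r hr.1).continuousAt.continuousWithinAt) (fun r hr => hF r hr.1.le)
        ((intervalIntegrable_iff_integrableOn_Ioc_of_le hab).2 hint_left), neg_sub]
  have hright : ∫ r in Ioi b, |F' r| = m - F b := by
    rw [setIntegral_congr_fun measurableSet_Ioi fun r hr => abs_of_nonneg (hinc r hr),
      integral_Ioi_of_hasDerivAt_of_nonneg' (fun r hr => hF r (hab.trans hr)) hinc hlim]
  rw [← Ioc_union_Ioi_eq_Ioi hab, setIntegral_union (Ioc_disjoint_Ioi le_rfl) measurableSet_Ioi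
    hint_left.abs hint_right.abs, hleft, hright]

end TotalVariation

section PolarCoordinates

variable {E : Type*} [NormedAddCommGroup E] [InnerProductSpace ℝ E] [FiniteDimensional ℝ E]
  [MeasurableSpace E] [BorelSpace E] [Nontrivial E]

lemma finrank_mul_volume_real_ball_one :
    (finrank ℝ E : ℝ) * volume.real (Metric.ball (0 : E) 1) =
      2 * π ^ ((finrank ℝ E : ℝ) / 2) / Gamma ((finrank ℝ E : ℝ) / 2) := by
  have hdim : (0 : ℝ) < finrank ℝ E := mod_cast finrank_pos
  have hpow : √π ^ finrank ℝ E = π ^ ((finrank ℝ E : ℝ) / 2) := by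
    rw [rpow_div_two_eq_sqrt _ pi_pos.le, rpow_natCast]
  rw [Measure.real, InnerProductSpace.volume_ball, Gamma_add_one (half_pos hdim).ne', hpow,
    ENNReal.ofReal_one, one_pow, one_mul, ENNReal.toReal_ofReal (by positivity)]
  field_simp

lemma integral_fun_norm_eq_integral_Ioi {F : Type*} [NormedAddCommGroup F] [NormedSpace ℝ F]
    (f : ℝ → F) :
    ∫ x : E, f ‖x‖ = (2 * π ^ ((finrank ℝ E : ℝ) / 2) / Gamma ((finrank ℝ E : ℝ) / 2)) •
      ∫ r in Ioi (0 : ℝ), r ^ (finrank ℝ E - 1) • f r := by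
  rw [integral_fun_norm_addHaar, ← finrank_mul_volume_real_ball_one, mul_smul,
    Nat.cast_smul_eq_nsmul]

end PolarCoordinates

/-- The radial profile of the Gaussian density: `gaussD d y x = gaussProfile d y ‖x‖`. -/
noncomputable def gaussProfile (d : ℕ) (y r : ℝ) : ℝ :=
  (2 * π * y) ^ (-(d : ℝ) / 2) * exp (-r ^ 2 / (2 * y))

/-- The derivative of `gaussProfile d y r` with respect to the variance `y`, in closed form. -/
noncomputable def gaussProfileDy (d : ℕ) (y r : ℝ) : ℝ :=
  gaussProfile d y r * ((r ^ 2 - d * y) / (2 * y ^ 2))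

section Gaussian

variable {d : ℕ} {y : ℝ}

lemma gaussProfile_nonneg (hy : 0 ≤ y) (r : ℝ) : 0 ≤ gaussProfile d y r := by
  unfold gaussProfile
  positivity

lemma hasDerivAt_gaussProfile_variance (hy : y ≠ 0) (r : ℝ) :
    HasDerivAt (fun u => gaussProfile d u r) (gaussProfileDy d y r) y := by
  have hbase : 2 * π * y ≠ 0 := by positivity
  have hpow : HasDerivAt (fun u => (2 * π * u) ^ (-(d : ℝ) / 2))
      (2 * π * (-(d : ℝ) / 2) * (2 * π * y) ^ (-(d : ℝ) / 2 - 1)) y := by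
    simpa using ((hasDerivAt_id y).const_mul (2 * π)).rpow_const (Or.inl hbase)
  have hexponent : HasDerivAt (fun u => -r ^ 2 / (2 * u)) (r ^ 2 / (2 * y ^ 2)) y := by
    convert! (hasDerivAt_const y (-r ^ 2)).div ((hasDerivAt_id y).const_mul 2)
      (mul_ne_zero two_ne_zero hy) using 1
    simp only [id_eq]
    field_simp
    ring
  convert! hpow.mul hexponent.exp using 1
  rw [gaussProfileDy, gaussProfile, rpow_sub_one hbase]
  field_simp
  ring

lemma gaussDy_eq_gaussProfileDy (hy : y ≠ 0) (x : EuclideanSpace ℝ (Fin d)) :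
    gaussDy d y x = gaussProfileDy d y ‖x‖ :=
  (hasDerivAt_gaussProfile_variance hy ‖x‖).deriv

lemma gaussDy_zero_dim (hy : y ≠ 0) : gaussDy 0 y = 0 := by
  ext x
  simp [gaussDy_eq_gaussProfileDy hy, Subsingleton.elim x 0, gaussProfileDy]

lemma tendsto_pow_mul_gaussProfile_atTop (k : ℕ) (hy : 0 < y) :
    Tendsto (fun r => r ^ k * gaussProfile d y r) atTop (𝓝 0) := by
  have hrpow := (tendsto_rpow_abs_mul_exp_neg_mul_sq_cocompact
    (inv_pos.2 (mul_pos two_pos hy)) k).mono_left atTop_le_cocompact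
  have hscaled := hrpow.const_mul ((2 * π * y) ^ (-(d : ℝ) / 2))
  rw [mul_zero] at hscaled
  refine hscaled.congr' ?_
  filter_upwards [eventually_ge_atTop 0] with r hr
  rw [gaussProfile, abs_of_nonneg hr, rpow_natCast, neg_mul, inv_mul_eq_div, ← neg_div]
  ring

lemma pow_mul_gaussProfile_sqrt (hy : 0 < y) :
    √(d * y) ^ d * gaussProfile d y √(d * y) = (d / (2 * π * exp 1)) ^ ((d : ℝ) / 2) := by
  have hsqrt : √(d * y) ^ d = (d * y) ^ ((d : ℝ) / 2) := by
    rw [rpow_div_two_eq_sqrt _ (by positivity), rpow_natCast]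
  have hexp : exp (-(d * y) / (2 * y)) = (exp 1)⁻¹ ^ ((d : ℝ) / 2) := by
    rw [← exp_neg, ← exp_mul]
    congr 1
    field_simp
  rw [gaussProfile, hsqrt, sq_sqrt (by positivity), hexp, neg_div, rpow_neg (by positivity),
    ← inv_rpow (by positivity), ← mul_rpow (by positivity) (by positivity),
    ← mul_rpow (by positivity) (by positivity)]
  congr 1
  field_simp

lemma pow_mul_gaussProfileDy_nonpos (k : ℕ) (hy : 0 ≤ y) {r : ℝ} (hr0 : 0 ≤ r)
    (hr : r ≤ √(d * y)) : r ^ k * gaussProfileDy d y r ≤ 0 := by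
  have hsq : r ^ 2 - d * y ≤ 0 := sub_nonpos.2 ((le_sqrt hr0 (by positivity)).1 hr)
  exact mul_nonpos_of_nonneg_of_nonpos (pow_nonneg hr0 k) <|
    mul_nonpos_of_nonneg_of_nonpos (gaussProfile_nonneg hy r) <|
      div_nonpos_of_nonpos_of_nonneg hsq (by positivity)

lemma pow_mul_gaussProfileDy_nonneg (k : ℕ) (hy : 0 ≤ y) {r : ℝ} (hr : √(d * y) ≤ r) :
    0 ≤ r ^ k * gaussProfileDy d y r := by
  have hr0 : 0 ≤ r := (sqrt_nonneg _).trans hr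
  have hsq : 0 ≤ r ^ 2 - d * y := sub_nonneg.2 ((sqrt_le_left hr0).1 hr)
  exact mul_nonneg (pow_nonneg hr0 k) <|
    mul_nonneg (gaussProfile_nonneg hy r) (div_nonneg hsq (by positivity))

section PositiveDimension

variable [NeZero d]

lemma hasDerivAt_neg_pow_mul_gaussProfile_div (hy : y ≠ 0) (r : ℝ) :
    HasDerivAt (fun r => -(r ^ d * gaussProfile d y r) / (2 * y))
      (r ^ (d - 1) * gaussProfileDy d y r) r := by
  have hexponent : HasDerivAt (fun r : ℝ => -r ^ 2 / (2 * y)) (-(2 * r) / (2 * y)) r := by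
    simpa using (hasDerivAt_pow 2 r).neg.div_const (2 * y)
  have hprofile := hexponent.exp.const_mul ((2 * π * y) ^ (-(d : ℝ) / 2))
  convert! ((hasDerivAt_pow d r).mul hprofile).neg.div_const (2 * y) using 1
  rw [gaussProfileDy, gaussProfile, ← mul_pow_sub_one (NeZero.ne d) r]
  field_simp
  ring

lemma integrableOn_pow_mul_gaussProfileDy (hy : 0 < y) :
    IntegrableOn (fun r => r ^ (d - 1) * gaussProfileDy d y r) (Ioi 0) :=
  integrableOn_Ioi_deriv_of_nonpos_of_nonneg (sqrt_nonneg (d * y))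
    (fun r _ => hasDerivAt_neg_pow_mul_gaussProfile_div hy.ne' r)
    (fun _ hr => pow_mul_gaussProfileDy_nonpos _ hy.le hr.1.le hr.2.le)
    (fun _ hr => pow_mul_gaussProfileDy_nonneg _ hy.le hr.le)
    ((tendsto_pow_mul_gaussProfile_atTop d hy).neg.div_const (2 * y))

lemma integral_pow_mul_abs_gaussProfileDy (hy : 0 < y) :
    ∫ r in Ioi (0 : ℝ), r ^ (d - 1) * |gaussProfileDy d y r| =
      1 / y * (d / (2 * π * exp 1)) ^ ((d : ℝ) / 2) := by
  have htotal := integral_Ioi_abs_deriv_of_nonpos_of_nonneg (sqrt_nonneg (d * y))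
    (fun r _ => hasDerivAt_neg_pow_mul_gaussProfile_div hy.ne' r)
    (fun _ hr => pow_mul_gaussProfileDy_nonpos _ hy.le hr.1.le hr.2.le)
    (fun _ hr => pow_mul_gaussProfileDy_nonneg _ hy.le hr.le)
    ((tendsto_pow_mul_gaussProfile_atTop d hy).neg.div_const (2 * y))
  have habs : EqOn (fun r => |r ^ (d - 1) * gaussProfileDy d y r|)
      (fun r => r ^ (d - 1) * |gaussProfileDy d y r|) (Ioi 0) := fun r hr => by
    simp only [abs_mul, abs_pow, abs_of_pos (mem_Ioi.1 hr)]
  rw [← setIntegral_congr_fun measurableSet_Ioi habs, htotal, pow_mul_gaussProfile_sqrt hy,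
    zero_pow (NeZero.ne d)]
  field_simp
  ring

end PositiveDimension

lemma integrable_gaussDy (hy : 0 < y) : Integrable (gaussDy d y) := by
  obtain rfl | _ := eq_zero_or_neZero d
  · rw [gaussDy_zero_dim hy.ne']
    exact integrable_zero _ _ _
  rw [funext (gaussDy_eq_gaussProfileDy hy.ne'), integrable_fun_norm_addHaar]
  simpa only [finrank_euclideanSpace_fin, smul_eq_mul] using
    integrableOn_pow_mul_gaussProfileDy hy

lemma integral_abs_gaussDy (hy : 0 < y) :
    ∫ x, |gaussDy d y x| =
      1 / y * (2 / Gamma ((d : ℝ) / 2)) * ((d : ℝ) / (2 * exp 1)) ^ ((d : ℝ) / 2) := by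
  obtain rfl | _ := eq_zero_or_neZero d
  · -- The junk values `Gamma 0 = 0` and `2 / 0 = 0` agree with the reading `2 / Γ(0) = 0`.
    simp [gaussDy_zero_dim hy.ne']
  have hpow : π ^ ((d : ℝ) / 2) * (d / (2 * π * exp 1)) ^ ((d : ℝ) / 2) =
      (d / (2 * exp 1)) ^ ((d : ℝ) / 2) := by
    rw [← mul_rpow (by positivity) (by positivity)]
    congr 1
    field_simp
  simp only [gaussDy_eq_gaussProfileDy hy.ne']
  rw [integral_fun_norm_eq_integral_Ioi fun r => |gaussProfileDy d y r|]
  simp only [finrank_euclideanSpace_fin, smul_eq_mul, integral_pow_mul_abs_gaussProfileDy hy,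
    ← hpow]
  ring

end Gaussian

theorem statement6_general {d : ℕ} (μ ν : Measure (EuclideanSpace ℝ (Fin d)))
    [IsFiniteMeasure μ] [IsFiniteMeasure ν] (y : ℝ) (hy : 0 < y) :
    (∫ x, |∫ z, gaussDy d y (x - z) ∂(μ ∗ ν)| ≤
      μ.real univ * ∫ x, |∫ z, gaussDy d y (x - z) ∂ν|) ∧
    (∫ x, |gaussDy d y x| =
      1 / y * (2 / Gamma ((d : ℝ) / 2)) * ((d : ℝ) / (2 * exp 1)) ^ ((d : ℝ) / 2)) ∧
    (∫ x, |∫ z, gaussDy d y (x - z) ∂μ| ≤ μ.real univ *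
      (1 / y * (2 / Gamma ((d : ℝ) / 2)) * ((d : ℝ) / (2 * exp 1)) ^ ((d : ℝ) / 2))) := by
  have hint : Integrable (gaussDy d y) := integrable_gaussDy hy
  refine ⟨integral_norm_integral_comp_sub_conv_le hint μ ν, integral_abs_gaussDy hy, ?_⟩
  rw [← integral_abs_gaussDy hy]
  exact integral_norm_integral_comp_sub_le hint μ

theorem statement6 {d : ℕ} (μ ν : Measure (EuclideanSpace ℝ (Fin d)))
    [IsProbabilityMeasure μ] [IsProbabilityMeasure ν] (y : ℝ) (hy : 0 < y) :
    (∫ x, |∫ z, gaussDy d y (x - z) ∂(μ ∗ ν)| ≤ ∫ x, |∫ z, gaussDy d y (x - z) ∂ν|) ∧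
    (∫ x, |gaussDy d y x| =
      1 / y * (2 / Real.Gamma ((d : ℝ) / 2)) * ((d : ℝ) / (2 * Real.exp 1)) ^ ((d : ℝ) / 2)) ∧
    (∫ x, |∫ z, gaussDy d y (x - z) ∂μ| ≤
      1 / y * (2 / Real.Gamma ((d : ℝ) / 2)) * ((d : ℝ) / (2 * Real.exp 1)) ^ ((d : ℝ) / 2)) := by
  simpa only [probReal_univ, one_mul] using statement6_general μ ν y hy
end

section
/- Let μ and ν be probability measures on ℝ^d and let y > 0. Then ‖ μ * ν * (∂n_y/∂y) ‖₁ ≤ 2 ∫_{y/2}^∞ ‖ μ * (∂n_v/∂v) ‖₁ · ‖ ν * (∂n_v/∂v) ‖₁ dv. -/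
open MeasureTheory Real

/-!
Differentiating the semigroup law `n_{a+b} = n_a * n_b` once in `a` and once in `b` gives
`∂²n_{a+b} = ∂n_a * ∂n_b`. Since `∂n_s → 0` as `s → ∞`, the fundamental theorem of calculus yields
`-∂n_y = ∫_y^∞ ∂²n_s ds = 2 ∫_{y/2}^∞ ∂n_v * ∂n_v dv`. Convolving with `μ * ν` and distributing `μ`
to one factor and `ν` to the other, the bound follows from `‖f * g‖₁ ≤ ‖f‖₁ ‖g‖₁`.
-/

open Filter Topology Function
open scoped ENNReal

section MeasureConv

/-- The convolution `μ * f` of a measure and a function, `x ↦ ∫ f (x - z) dμ(z)`. -/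
noncomputable def measureConv {G E : Type*} [MeasurableSpace G] [Sub G] [NormedAddCommGroup E]
    [NormedSpace ℝ E] (μ : Measure G) (f : G → E) (x : G) : E :=
  ∫ z, f (x - z) ∂μ

section AddGroup

variable {G : Type*} [MeasurableSpace G] [AddGroup G] [MeasurableAdd₂ G] [MeasurableNeg G]
  {E : Type*} [NormedAddCommGroup E] [NormedSpace ℝ E] {𝕜 : Type*} [RCLike 𝕜]
  {T : Type*} [MeasurableSpace T] {μ ν m : Measure G} {τ : Measure T}

lemma stronglyMeasurable_uncurry_measureConv [SFinite μ] {K : T → G → E}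
    (hK : StronglyMeasurable (uncurry K)) :
    StronglyMeasurable (uncurry fun t => measureConv μ (K t)) :=
  (hK.comp_measurable (g := fun s : (T × G) × G => (s.1.1, s.1.2 - s.2))
    (by fun_prop)).integral_prod_right'

lemma stronglyMeasurable_measureConv [SFinite μ] {f : G → E} (hf : StronglyMeasurable f) :
    StronglyMeasurable (measureConv μ f) :=
  (hf.comp_measurable (g := fun s : G × G => s.1 - s.2) (by fun_prop)).integral_prod_right'

lemma measureConv_conv_eq {f : G → E} (hf : StronglyMeasurable f) (x : G) :
    measureConv (μ ∗ ν) f x = ∫ p, f (x - (p.1 + p.2)) ∂(μ.prod ν) :=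
  integral_map (by fun_prop)
    (hf.comp_measurable (measurable_const.sub measurable_id)).aestronglyMeasurable

lemma lintegral_enorm_measureConv_le [SFinite μ] [SFinite m] [m.IsAddRightInvariant]
    {f : G → E} (hf : StronglyMeasurable f) :
    ∫⁻ x, ‖measureConv μ f x‖ₑ ∂m ≤ μ Set.univ * ∫⁻ x, ‖f x‖ₑ ∂m := by
  have hmeas : Measurable (uncurry fun x z : G => ‖f (x - z)‖ₑ) :=
    hf.enorm.comp (by fun_prop : Measurable fun s : G × G => s.1 - s.2)
  calc ∫⁻ x, ‖measureConv μ f x‖ₑ ∂m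
    _ ≤ ∫⁻ x, ∫⁻ z, ‖f (x - z)‖ₑ ∂μ ∂m :=
      lintegral_mono fun _ => enorm_integral_le_lintegral_enorm _
    _ = ∫⁻ z, ∫⁻ x, ‖f (x - z)‖ₑ ∂m ∂μ := lintegral_lintegral_swap hmeas.aemeasurable
    _ = μ Set.univ * ∫⁻ x, ‖f x‖ₑ ∂m := by
      simp_rw [lintegral_sub_right_eq_self (fun x => ‖f x‖ₑ)]
      rw [lintegral_const, mul_comm]

lemma lintegral_lintegral_prod_sub_mul [SFinite m] [m.IsAddRightInvariant] [SFinite τ]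
    {f g : T → G → ℝ≥0∞} (hf : Measurable (uncurry f)) (hg : Measurable (uncurry g)) :
    ∫⁻ x, ∫⁻ r, f r.1 (x - r.2) * g r.1 r.2 ∂(τ.prod m) ∂m =
      ∫⁻ t, (∫⁻ x, f t x ∂m) * (∫⁻ x, g t x ∂m) ∂τ := by
  have hmul : Measurable (uncurry fun (x : G) (r : T × G) => f r.1 (x - r.2) * g r.1 r.2) :=
    (hf.comp (by fun_prop : Measurable fun s : G × T × G => (s.2.1, s.1 - s.2.2))).mul
      (hg.comp measurable_snd)
  have hfg : Measurable fun r : T × G => (∫⁻ x, f r.1 x ∂m) * g r.1 r.2 :=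
    (hf.lintegral_prod_right'.comp measurable_fst).mul hg
  have inner_x : ∀ r : T × G,
      ∫⁻ x, f r.1 (x - r.2) * g r.1 r.2 ∂m = (∫⁻ x, f r.1 x ∂m) * g r.1 r.2 := fun r => by
    have hf_sub : Measurable fun x => f r.1 (x - r.2) :=
      hf.of_uncurry_left.comp (measurable_sub_const r.2)
    rw [lintegral_mul_const _ hf_sub, lintegral_sub_right_eq_self (f r.1)]
  rw [lintegral_lintegral_swap hmul.aemeasurable]
  simp_rw [inner_x]
  rw [lintegral_prod _ hfg.aemeasurable]
  exact lintegral_congr fun t =>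
    lintegral_const_mul (∫⁻ x, f t x ∂m) (hg.of_uncurry_left (x := t))

variable {K L : T → G → 𝕜}

lemma stronglyMeasurable_integral_integral_sub_mul [SFinite m] [SFinite τ]
    (hK : StronglyMeasurable (uncurry K)) (hL : StronglyMeasurable (uncurry L)) :
    StronglyMeasurable fun x => ∫ t, ∫ w, K t (x - w) * L t w ∂m ∂τ := by
  have hKL : StronglyMeasurable fun s : (G × T) × G => K s.1.2 (s.1.1 - s.2) * L s.1.2 s.2 :=
    (hK.comp_measurable (g := fun s : (G × T) × G => (s.1.2, s.1.1 - s.2)) (by fun_prop)).mul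
      (hL.comp_measurable (g := fun s : (G × T) × G => (s.1.2, s.2)) (by fun_prop))
  exact hKL.integral_prod_right'.integral_prod_right'

end AddGroup

section AddCommGroup

variable {G : Type*} [MeasurableSpace G] [AddCommGroup G] [MeasurableAdd₂ G] [MeasurableNeg G]
  {𝕜 : Type*} [RCLike 𝕜] {T : Type*} [MeasurableSpace T] {μ ν m : Measure G} {τ : Measure T}
  {K L : T → G → 𝕜}

lemma lintegral_lintegral_prod_enorm_translated_mul [SFinite m] [m.IsAddRightInvariant] [SFinite τ]
    (hK : StronglyMeasurable (uncurry K)) (hL : StronglyMeasurable (uncurry L)) (p q : G) :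
    ∫⁻ x, ∫⁻ r, ‖K r.1 (x - p - r.2) * L r.1 (r.2 - q)‖ₑ ∂(τ.prod m) ∂m =
      ∫⁻ t, (∫⁻ x, ‖K t x‖ₑ ∂m) * (∫⁻ x, ‖L t x‖ₑ ∂m) ∂τ := by
  have h := lintegral_lintegral_prod_sub_mul (m := m) (τ := τ)
    (f := fun t x => ‖K t (x - p)‖ₑ) (g := fun t x => ‖L t (x - q)‖ₑ)
    (hK.enorm.comp (by fun_prop : Measurable fun s : T × G => (s.1, s.2 - p)))
    (hL.enorm.comp (by fun_prop : Measurable fun s : T × G => (s.1, s.2 - q)))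
  have hK_shift (t : T) : ∫⁻ x, ‖K t (x - p)‖ₑ ∂m = ∫⁻ x, ‖K t x‖ₑ ∂m :=
    lintegral_sub_right_eq_self (fun x => ‖K t x‖ₑ) p
  have hL_shift (t : T) : ∫⁻ x, ‖L t (x - q)‖ₑ ∂m = ∫⁻ x, ‖L t x‖ₑ ∂m :=
    lintegral_sub_right_eq_self (fun x => ‖L t x‖ₑ) q
  simpa only [enorm_mul, hK_shift, hL_shift, sub_right_comm _ p] using h

lemma ae_integrable_translated_mul [IsFiniteMeasure μ] [IsFiniteMeasure ν] [SFinite m]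
    [m.IsAddRightInvariant] [SFinite τ]
    (hK : StronglyMeasurable (uncurry K)) (hL : StronglyMeasurable (uncurry L))
    (hfin : ∫⁻ t, (∫⁻ x, ‖K t x‖ₑ ∂m) * (∫⁻ x, ‖L t x‖ₑ ∂m) ∂τ ≠ ∞) :
    ∀ᵐ x ∂m, Integrable (uncurry fun (p : G × G) (r : T × G) =>
      K r.1 (x - p.1 - r.2) * L r.1 (r.2 - p.2)) ((μ.prod ν).prod (τ.prod m)) := by
  let Q : G × (G × G) × T × G → 𝕜 := fun s =>
    K s.2.2.1 (s.1 - s.2.1.1 - s.2.2.2) * L s.2.2.1 (s.2.2.2 - s.2.1.2)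
  have hQ : StronglyMeasurable Q :=
    (hK.comp_measurable (g := fun s : G × (G × G) × T × G =>
        (s.2.2.1, s.1 - s.2.1.1 - s.2.2.2)) (by fun_prop)).mul
      (hL.comp_measurable (g := fun s : G × (G × G) × T × G =>
        (s.2.2.1, s.2.2.2 - s.2.1.2)) (by fun_prop))
  have hQ_int : Integrable Q (m.prod ((μ.prod ν).prod (τ.prod m))) := by
    refine ⟨hQ.aestronglyMeasurable, ?_⟩
    have hQp : Measurable fun s : (G × G × G) × T × G => ‖Q (s.1.1, s.1.2, s.2)‖ₑ :=
      hQ.enorm.comp (by fun_prop)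
    have lintegral_Q (x : G) : ∫⁻ s, ‖Q (x, s)‖ₑ ∂((μ.prod ν).prod (τ.prod m)) =
        ∫⁻ p, ∫⁻ r, ‖Q (x, p, r)‖ₑ ∂(τ.prod m) ∂(μ.prod ν) :=
      lintegral_prod _ (hQ.enorm.comp measurable_prodMk_left).aemeasurable
    rw [HasFiniteIntegral, lintegral_prod _ hQ.enorm.aemeasurable]
    simp_rw [lintegral_Q]
    rw [lintegral_lintegral_swap hQp.lintegral_prod_right'.aemeasurable]
    simp_rw [Q, lintegral_lintegral_prod_enorm_translated_mul hK hL]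
    rw [lintegral_const]
    exact ENNReal.mul_lt_top hfin.lt_top (measure_lt_top _ _)
  exact hQ_int.prod_right_ae

lemma measureConv_conv_integral_ae_eq [IsFiniteMeasure μ] [IsFiniteMeasure ν] [SFinite m]
    [m.IsAddRightInvariant] [SFinite τ]
    (hK : StronglyMeasurable (uncurry K)) (hL : StronglyMeasurable (uncurry L))
    (hfin : ∫⁻ t, (∫⁻ x, ‖K t x‖ₑ ∂m) * (∫⁻ x, ‖L t x‖ₑ ∂m) ∂τ ≠ ∞) :
    measureConv (μ ∗ ν) (fun x => ∫ t, ∫ w, K t (x - w) * L t w ∂m ∂τ) =ᵐ[m]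
      fun x => ∫ r, measureConv μ (K r.1) (x - r.2) * measureConv ν (L r.1) r.2 ∂(τ.prod m) := by
  filter_upwards [ae_integrable_translated_mul (μ := μ) (ν := ν) hK hL hfin] with x hQ
  have translate (p : G × G) (t : T) : ∫ w, K t (x - (p.1 + p.2) - w) * L t w ∂m =
      ∫ w, K t (x - p.1 - w) * L t (w - p.2) ∂m := by
    rw [← integral_sub_right_eq_self (fun w => K t (x - (p.1 + p.2) - w) * L t w) p.2]
    congr! 4 with w
    abel
  rw [measureConv_conv_eq (stronglyMeasurable_integral_integral_sub_mul hK hL)]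
  simp_rw [translate]
  calc ∫ p, ∫ t, ∫ w, K t (x - p.1 - w) * L t (w - p.2) ∂m ∂τ ∂(μ.prod ν)
    _ = ∫ p, ∫ r, K r.1 (x - p.1 - r.2) * L r.1 (r.2 - p.2) ∂(τ.prod m) ∂(μ.prod ν) :=
      integral_congr_ae (hQ.prod_right_ae.mono fun _ hp => (integral_prod _ hp).symm)
    _ = ∫ r, ∫ p, K r.1 (x - p.1 - r.2) * L r.1 (r.2 - p.2) ∂(μ.prod ν) ∂(τ.prod m) :=
      integral_integral_swap hQ
    _ = ∫ r, measureConv μ (K r.1) (x - r.2) * measureConv ν (L r.1) r.2 ∂(τ.prod m) := by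
      refine integral_congr_ae (ae_of_all _ fun r => ?_)
      simp only [measureConv, sub_right_comm x _ r.2]
      exact integral_prod_mul (fun p => K r.1 (x - r.2 - p)) (fun q => L r.1 (r.2 - q))

lemma lintegral_enorm_measureConv_conv_integral_le [IsFiniteMeasure μ] [IsFiniteMeasure ν]
    [SFinite m] [m.IsAddRightInvariant] [SFinite τ]
    (hK : StronglyMeasurable (uncurry K)) (hL : StronglyMeasurable (uncurry L))
    (hfin : ∫⁻ t, (∫⁻ x, ‖K t x‖ₑ ∂m) * (∫⁻ x, ‖L t x‖ₑ ∂m) ∂τ ≠ ∞) :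
    ∫⁻ x, ‖measureConv (μ ∗ ν) (fun x => ∫ t, ∫ w, K t (x - w) * L t w ∂m ∂τ) x‖ₑ ∂m ≤
      ∫⁻ t, (∫⁻ x, ‖measureConv μ (K t) x‖ₑ ∂m) * (∫⁻ x, ‖measureConv ν (L t) x‖ₑ ∂m) ∂τ := by
  rw [← lintegral_lintegral_prod_sub_mul (stronglyMeasurable_uncurry_measureConv hK).enorm
    (stronglyMeasurable_uncurry_measureConv hL).enorm]
  refine lintegral_mono_ae ((measureConv_conv_integral_ae_eq (μ := μ) (ν := ν) hK hL hfin).mono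
    fun x hx => ?_)
  rw [hx]
  simpa only [enorm_mul] using enorm_integral_le_lintegral_enorm (μ := τ.prod m)
    fun r => measureConv μ (K r.1) (x - r.2) * measureConv ν (L r.1) r.2

lemma lintegral_lintegral_enorm_measureConv_mul_ne_top [IsFiniteMeasure μ] [IsFiniteMeasure ν]
    [SFinite m] [m.IsAddRightInvariant]
    (hK : StronglyMeasurable (uncurry K)) (hL : StronglyMeasurable (uncurry L))
    (hfin : ∫⁻ t, (∫⁻ x, ‖K t x‖ₑ ∂m) * (∫⁻ x, ‖L t x‖ₑ ∂m) ∂τ ≠ ∞) :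
    ∫⁻ t, (∫⁻ x, ‖measureConv μ (K t) x‖ₑ ∂m) * (∫⁻ x, ‖measureConv ν (L t) x‖ₑ ∂m) ∂τ ≠ ∞ := by
  refine ne_top_of_le_ne_top (b := μ Set.univ * ν Set.univ *
    ∫⁻ t, (∫⁻ x, ‖K t x‖ₑ ∂m) * (∫⁻ x, ‖L t x‖ₑ ∂m) ∂τ) (by finiteness) ?_
  rw [← lintegral_const_mul' _ _ (by finiteness)]
  refine lintegral_mono fun t => ?_
  rw [mul_mul_mul_comm]
  exact mul_le_mul' (lintegral_enorm_measureConv_le hK.of_uncurry_left)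
    (lintegral_enorm_measureConv_le hL.of_uncurry_left)

theorem integral_norm_measureConv_conv_integral_le [IsFiniteMeasure μ] [IsFiniteMeasure ν]
    [SFinite m] [m.IsAddRightInvariant] [SFinite τ]
    (hK : StronglyMeasurable (uncurry K)) (hL : StronglyMeasurable (uncurry L))
    (hfin : ∫⁻ t, (∫⁻ x, ‖K t x‖ₑ ∂m) * (∫⁻ x, ‖L t x‖ₑ ∂m) ∂τ ≠ ∞) :
    ∫ x, ‖measureConv (μ ∗ ν) (fun x => ∫ t, ∫ w, K t (x - w) * L t w ∂m ∂τ) x‖ ∂m ≤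
      ∫ t, (∫ x, ‖measureConv μ (K t) x‖ ∂m) * (∫ x, ‖measureConv ν (L t) x‖ ∂m) ∂τ := by
  have hμK := stronglyMeasurable_uncurry_measureConv (μ := μ) hK
  have hνL := stronglyMeasurable_uncurry_measureConv (μ := ν) hL
  have hmeas : Measurable fun t =>
      (∫⁻ x, ‖measureConv μ (K t) x‖ₑ ∂m) * (∫⁻ x, ‖measureConv ν (L t) x‖ₑ ∂m) :=
    hμK.enorm.lintegral_prod_right'.mul hνL.enorm.lintegral_prod_right'
  have hne_top := lintegral_lintegral_enorm_measureConv_mul_ne_top (μ := μ) (ν := ν) hK hL hfin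
  have hLHS := stronglyMeasurable_measureConv (μ := μ ∗ ν)
    (stronglyMeasurable_integral_integral_sub_mul (m := m) (τ := τ) hK hL)
  simp_rw [integral_norm_eq_lintegral_enorm hLHS.aestronglyMeasurable,
    integral_norm_eq_lintegral_enorm hμK.of_uncurry_left.aestronglyMeasurable,
    integral_norm_eq_lintegral_enorm hνL.of_uncurry_left.aestronglyMeasurable,
    ← ENNReal.toReal_mul]
  rw [integral_toReal hmeas.aemeasurable (ae_lt_top hmeas hne_top)]
  exact ENNReal.toReal_mono hne_top (lintegral_enorm_measureConv_conv_integral_le hK hL hfin)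

end AddCommGroup

end MeasureConv

section Gaussian

variable {d : ℕ}

/-- The closed form of `gaussDy d y` for `0 < y`. Unlike `gaussDy`, it is visibly jointly measurable
in `(y, x)`. -/
noncomputable def gaussDeriv (d : ℕ) (y : ℝ) (x : EuclideanSpace ℝ (Fin d)) : ℝ :=
  gaussD d y x * (‖x‖ ^ 2 / (2 * y ^ 2) - d / (2 * y))

/-- A constant `C` such that `|∂n_y| ≤ (C / y) n_{2y}` on `ℝ^d`. -/
noncomputable def gaussDerivConst (d : ℕ) : ℝ := 2 ^ ((d : ℝ) / 2) * (2 + d / 2)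

lemma gaussDerivConst_nonneg (d : ℕ) : 0 ≤ gaussDerivConst d := by
  unfold gaussDerivConst
  positivity

lemma gaussD_nonneg {y : ℝ} (hy : 0 ≤ y) (x : EuclideanSpace ℝ (Fin d)) : 0 ≤ gaussD d y x := by
  unfold gaussD
  positivity

lemma gaussD_zero_right (y : ℝ) : gaussD d y 0 = (2 * π * y) ^ (-(d : ℝ) / 2) := by
  simp [gaussD]

lemma gaussD_le_gaussD_zero {y : ℝ} (hy : 0 ≤ y) (x : EuclideanSpace ℝ (Fin d)) :
    gaussD d y x ≤ gaussD d y 0 := by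
  have exponent_nonpos : -‖x‖ ^ 2 / (2 * y) ≤ 0 :=
    div_nonpos_of_nonpos_of_nonneg (neg_nonpos.2 (sq_nonneg _)) (by positivity)
  rw [gaussD_zero_right, gaussD]
  exact mul_le_of_le_one_right (by positivity) (exp_le_one_iff.2 exponent_nonpos)

lemma gaussD_zero_anti {u v : ℝ} (hu : 0 < u) (huv : u ≤ v) : gaussD d v 0 ≤ gaussD d u 0 := by
  have hd : -(d : ℝ) / 2 ≤ 0 := div_nonpos_of_nonpos_of_nonneg (by simp) zero_le_two
  simp only [gaussD_zero_right]
  exact rpow_le_rpow_of_nonpos (by positivity) (by gcongr) hd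

lemma measurable_uncurry_gaussD : Measurable (uncurry (gaussD d)) := by
  unfold gaussD uncurry
  fun_prop

lemma measurable_uncurry_gaussDeriv : Measurable (uncurry (gaussDeriv d)) :=
  measurable_uncurry_gaussD.mul (by fun_prop)

lemma hasDerivAt_gaussD {y : ℝ} (hy : 0 < y) (x : EuclideanSpace ℝ (Fin d)) :
    HasDerivAt (fun u => gaussD d u x) (gaussDeriv d y x) y := by
  have hpos : 0 < 2 * π * y := by positivity
  have h_power : HasDerivAt (fun u : ℝ => (2 * π * u) ^ (-(d : ℝ) / 2))
      (2 * π * (-(d : ℝ) / 2) * (2 * π * y) ^ (-(d : ℝ) / 2 - 1)) y := by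
    simpa using ((hasDerivAt_id y).const_mul (2 * π)).rpow_const (p := -(d : ℝ) / 2)
      (Or.inl hpos.ne')
  have h_exponent : HasDerivAt (fun u : ℝ => -‖x‖ ^ 2 / (2 * u)) (‖x‖ ^ 2 / (2 * y ^ 2)) y := by
    have exponent_eq (u : ℝ) : -‖x‖ ^ 2 / (2 * u) = -‖x‖ ^ 2 / 2 * u⁻¹ := by
      rw [← div_div, div_eq_mul_inv _ u]
    simp_rw [exponent_eq]
    exact ((hasDerivAt_inv hy.ne').const_mul (-‖x‖ ^ 2 / 2)).congr_deriv (by field_simp)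
  refine (h_power.mul h_exponent.exp).congr_deriv ?_
  rw [gaussDeriv, gaussD, rpow_sub_one hpos.ne']
  field_simp
  ring

lemma gaussDy_eq_gaussDeriv {y : ℝ} (hy : 0 < y) : gaussDy d y = gaussDeriv d y :=
  funext fun x => (hasDerivAt_gaussD hy x).deriv

lemma integral_gaussD {y : ℝ} (hy : 0 < y) : ∫ x, gaussD d y x = 1 := by
  have exponent_eq (x : EuclideanSpace ℝ (Fin d)) :
      -‖x‖ ^ 2 / (2 * y) = -(1 / (2 * y)) * ‖x‖ ^ 2 := by ring
  have base_eq : π / (1 / (2 * y)) = 2 * π * y := by field_simp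
  simp only [gaussD, exponent_eq]
  rw [integral_const_mul, GaussianFourier.integral_rexp_neg_mul_sq_norm (by positivity),
    finrank_euclideanSpace_fin, base_eq, neg_div, rpow_neg (by positivity)]
  exact inv_mul_cancel₀ (by positivity)

lemma integrable_gaussD {y : ℝ} (hy : 0 < y) : Integrable (gaussD d y) :=
  integrable_of_integral_eq_one (integral_gaussD hy)

lemma gaussD_sub_mul_gaussD {a b : ℝ} (ha : 0 < a) (hb : 0 < b) (x w : EuclideanSpace ℝ (Fin d)) :
    gaussD d a (x - w) * gaussD d b w =
      gaussD d (a + b) x * gaussD d (a * b / (a + b)) (w - (b / (a + b)) • x) := by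
  have prefactors : 2 * π * a * (2 * π * b) = 2 * π * (a + b) * (2 * π * (a * b / (a + b))) := by
    field_simp
  have exponents : -‖x - w‖ ^ 2 / (2 * a) + -‖w‖ ^ 2 / (2 * b) = -‖x‖ ^ 2 / (2 * (a + b)) +
      -‖w - (b / (a + b)) • x‖ ^ 2 / (2 * (a * b / (a + b))) := by
    rw [norm_sub_sq_real, norm_sub_sq_real, norm_smul, inner_smul_right, real_inner_comm,
      norm_of_nonneg (by positivity)]
    field_simp
    ring
  unfold gaussD
  rw [mul_mul_mul_comm, ← mul_rpow (by positivity) (by positivity), ← exp_add, prefactors,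
    exponents, exp_add, mul_rpow (by positivity) (by positivity), mul_mul_mul_comm]

lemma integral_gaussD_sub_mul_gaussD {a b : ℝ} (ha : 0 < a) (hb : 0 < b)
    (x : EuclideanSpace ℝ (Fin d)) :
    ∫ w, gaussD d a (x - w) * gaussD d b w = gaussD d (a + b) x := by
  simp_rw [gaussD_sub_mul_gaussD ha hb]
  rw [integral_const_mul, integral_sub_right_eq_self (gaussD d (a * b / (a + b))),
    integral_gaussD (by positivity), mul_one]

lemma gaussD_eq_mul_gaussD_two_mul {y : ℝ} (hy : 0 < y) (x : EuclideanSpace ℝ (Fin d)) :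
    gaussD d y x = 2 ^ ((d : ℝ) / 2) * exp (-(‖x‖ ^ 2 / (4 * y))) * gaussD d (2 * y) x := by
  have exponent_eq :
      -‖x‖ ^ 2 / (2 * y) = -(‖x‖ ^ 2 / (4 * y)) + -‖x‖ ^ 2 / (2 * (2 * y)) := by
    field_simp
    ring
  have power_eq : (2 * π * y) ^ (-(d : ℝ) / 2) =
      2 ^ ((d : ℝ) / 2) * (2 * π * (2 * y)) ^ (-(d : ℝ) / 2) := by
    rw [mul_left_comm _ 2 y, mul_rpow zero_le_two (by positivity), ← mul_assoc,
      ← rpow_add zero_lt_two, neg_div, add_neg_cancel, rpow_zero, one_mul]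
  rw [gaussD, gaussD, exponent_eq, power_eq, exp_add]
  ring

lemma abs_gaussDeriv_le {y : ℝ} (hy : 0 < y) (x : EuclideanSpace ℝ (Fin d)) :
    |gaussDeriv d y x| ≤ gaussDerivConst d / y * gaussD d (2 * y) x := by
  have h_gaussD := gaussD_nonneg (mul_nonneg zero_le_two hy.le) x
  set t := ‖x‖ ^ 2 / (4 * y) with ht
  have ht_nonneg : 0 ≤ t := by positivity
  have exp_mul_le : exp (-t) * (2 * t + d / 2) ≤ 2 + d / 2 := by
    have h_exp : exp (-t) ≤ 1 := exp_le_one_iff.2 (neg_nonpos.2 ht_nonneg)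
    have h_mul_exp : t * exp (-t) ≤ 1 :=
      (mul_exp_neg_le_exp_neg_one t).trans (exp_le_one_iff.2 (by norm_num))
    have h_d : (d : ℝ) / 2 * exp (-t) ≤ d / 2 := mul_le_of_le_one_right (by positivity) h_exp
    linarith
  have factor_le : |‖x‖ ^ 2 / (2 * y ^ 2) - d / (2 * y)| ≤ (2 * t + d / 2) / y := by
    have first_eq : ‖x‖ ^ 2 / (2 * y ^ 2) = 2 * t / y := by rw [ht]; field_simp; norm_num
    have second_eq : (d : ℝ) / (2 * y) = d / 2 / y := by field_simp
    rw [first_eq, second_eq, add_div]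
    refine (abs_sub _ _).trans_eq ?_
    rw [abs_of_nonneg (by positivity), abs_of_nonneg (by positivity)]
  calc |gaussDeriv d y x|
    _ = gaussD d y x * |‖x‖ ^ 2 / (2 * y ^ 2) - d / (2 * y)| := by
      rw [gaussDeriv, abs_mul, abs_of_nonneg (gaussD_nonneg hy.le x)]
    _ ≤ gaussD d y x * ((2 * t + d / 2) / y) :=
      mul_le_mul_of_nonneg_left factor_le (gaussD_nonneg hy.le x)
    _ = 2 ^ ((d : ℝ) / 2) * gaussD d (2 * y) x / y * (exp (-t) * (2 * t + d / 2)) := by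
      rw [gaussD_eq_mul_gaussD_two_mul hy]
      ring
    _ ≤ 2 ^ ((d : ℝ) / 2) * gaussD d (2 * y) x / y * (2 + d / 2) := by gcongr
    _ = gaussDerivConst d / y * gaussD d (2 * y) x := by
      rw [gaussDerivConst]
      ring

lemma abs_gaussDeriv_le_div {u y : ℝ} (hu : 0 < u) (huy : u ≤ y) (x : EuclideanSpace ℝ (Fin d)) :
    |gaussDeriv d y x| ≤ gaussDerivConst d / y * gaussD d (2 * u) 0 := by
  have hy : 0 < y := hu.trans_le huy
  have hC := gaussDerivConst_nonneg d
  calc |gaussDeriv d y x|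
    _ ≤ gaussDerivConst d / y * gaussD d (2 * y) x := abs_gaussDeriv_le hy x
    _ ≤ gaussDerivConst d / y * gaussD d (2 * y) 0 := by
      gcongr
      exact gaussD_le_gaussD_zero (by positivity) x
    _ ≤ gaussDerivConst d / y * gaussD d (2 * u) 0 := by
      gcongr
      exact gaussD_zero_anti (by positivity) (by gcongr)

lemma tendsto_gaussDeriv_atTop (x : EuclideanSpace ℝ (Fin d)) :
    Tendsto (fun y => gaussDeriv d y x) atTop (𝓝 0) := by
  have hbound : Tendsto (fun y => gaussDerivConst d / y * gaussD d (2 * 1) 0) atTop (𝓝 0) := by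
    simpa using (tendsto_id.const_div_atTop (gaussDerivConst d)).mul_const (gaussD d (2 * 1) 0)
  refine squeeze_zero_norm' ?_ hbound
  filter_upwards [eventually_ge_atTop 1] with y hy
  exact abs_gaussDeriv_le_div one_pos hy x

lemma integrable_gaussDeriv {y : ℝ} (hy : 0 < y) : Integrable (gaussDeriv d y) :=
  ((integrable_gaussD (by positivity)).const_mul _).mono'
    measurable_uncurry_gaussDeriv.of_uncurry_left.aestronglyMeasurable
    (ae_of_all _ fun x => abs_gaussDeriv_le hy x)

lemma integral_norm_gaussDeriv_le {y : ℝ} (hy : 0 < y) :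
    ∫ x, ‖gaussDeriv d y x‖ ≤ gaussDerivConst d / y := by
  have h2y : 0 < 2 * y := by positivity
  calc ∫ x, ‖gaussDeriv d y x‖
    _ ≤ ∫ x, gaussDerivConst d / y * gaussD d (2 * y) x :=
      integral_mono (integrable_gaussDeriv hy).norm ((integrable_gaussD h2y).const_mul _)
        (abs_gaussDeriv_le hy)
    _ = gaussDerivConst d / y := by rw [integral_const_mul, integral_gaussD h2y, mul_one]

lemma norm_integral_gaussDeriv_sub_mul_le {u y : ℝ} (hu : 0 < u) (huy : u ≤ y)
    (x : EuclideanSpace ℝ (Fin d)) :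
    ‖∫ w, gaussDeriv d y (x - w) * gaussDeriv d y w‖ ≤
      (gaussDerivConst d / y) ^ 2 * gaussD d (2 * u) 0 := by
  have hy : 0 < y := hu.trans_le huy
  have hC := gaussDerivConst_nonneg d
  have h_gaussD := gaussD_nonneg (d := d) (mul_nonneg zero_le_two hu.le) 0
  have pointwise (w : EuclideanSpace ℝ (Fin d)) : ‖gaussDeriv d y (x - w) * gaussDeriv d y w‖ ≤
      gaussDerivConst d / y * gaussD d (2 * u) 0 * ‖gaussDeriv d y w‖ := by
    rw [norm_mul]
    exact mul_le_mul_of_nonneg_right (abs_gaussDeriv_le_div hu huy _) (norm_nonneg _)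
  calc ‖∫ w, gaussDeriv d y (x - w) * gaussDeriv d y w‖
    _ ≤ ∫ w, gaussDerivConst d / y * gaussD d (2 * u) 0 * ‖gaussDeriv d y w‖ :=
      norm_integral_le_of_norm_le ((integrable_gaussDeriv hy).norm.const_mul _)
        (ae_of_all _ pointwise)
    _ = gaussDerivConst d / y * gaussD d (2 * u) 0 * ∫ w, ‖gaussDeriv d y w‖ :=
      integral_const_mul _ _
    _ ≤ gaussDerivConst d / y * gaussD d (2 * u) 0 * (gaussDerivConst d / y) := by
      gcongr
      exact integral_norm_gaussDeriv_le hy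
    _ = (gaussDerivConst d / y) ^ 2 * gaussD d (2 * u) 0 := by ring

lemma hasDerivAt_integral_mul_gaussD {α : Type*} [MeasurableSpace α] {ρ : Measure α} {φ : α → ℝ}
    (hφ : Integrable φ ρ) {ψ : α → EuclideanSpace ℝ (Fin d)} (hψ : Measurable ψ)
    {y : ℝ} (hy : 0 < y) :
    HasDerivAt (fun u => ∫ w, φ w * gaussD d u (ψ w) ∂ρ)
      (∫ w, φ w * gaussDeriv d y (ψ w) ∂ρ) y := by
  have h_gaussD_meas (u : ℝ) : AEStronglyMeasurable (fun w => gaussD d u (ψ w)) ρ :=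
    (measurable_uncurry_gaussD.of_uncurry_left.comp hψ).aestronglyMeasurable
  have h_gaussDeriv_meas : AEStronglyMeasurable (fun w => gaussDeriv d y (ψ w)) ρ :=
    (measurable_uncurry_gaussDeriv.of_uncurry_left.comp hψ).aestronglyMeasurable
  have h_gaussD_bound (w : α) : ‖gaussD d y (ψ w)‖ ≤ gaussD d y 0 := by
    rw [norm_of_nonneg (gaussD_nonneg hy.le _)]
    exact gaussD_le_gaussD_zero hy.le _
  have h_gaussDeriv_bound (w : α) {u : ℝ} (hu : y / 2 < u) :
      ‖gaussDeriv d u (ψ w)‖ ≤ gaussDerivConst d / (y / 2) * gaussD d (2 * (y / 2)) 0 := by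
    have hC := gaussDerivConst_nonneg d
    have h_gaussD := gaussD_nonneg (d := d) (mul_nonneg zero_le_two (half_pos hy).le) 0
    exact (abs_gaussDeriv_le_div (half_pos hy) hu.le _).trans (by gcongr)
  refine (hasDerivAt_integral_of_dominated_loc_of_deriv_le
    (F' := fun u w => φ w * gaussDeriv d u (ψ w))
    (bound := fun w => ‖φ w‖ * (gaussDerivConst d / (y / 2) * gaussD d (2 * (y / 2)) 0))
    (Ioi_mem_nhds (half_lt_self hy)) (Eventually.of_forall fun u => hφ.1.mul (h_gaussD_meas u))
    (hφ.mul_bdd (h_gaussD_meas y) (ae_of_all _ h_gaussD_bound)) (hφ.1.mul h_gaussDeriv_meas) ?_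
    (hφ.norm.mul_const _) ?_).2
  · refine ae_of_all _ fun w u hu => ?_
    rw [norm_mul]
    exact mul_le_mul_of_nonneg_left (h_gaussDeriv_bound w hu) (norm_nonneg _)
  · exact ae_of_all _ fun w u hu =>
      (hasDerivAt_gaussD ((half_pos hy).trans hu) (ψ w)).const_mul (φ w)

lemma integral_gaussDeriv_sub_mul_gaussD {a b : ℝ} (ha : 0 < a) (hb : 0 < b)
    (x : EuclideanSpace ℝ (Fin d)) :
    ∫ w, gaussDeriv d a (x - w) * gaussD d b w = gaussDeriv d (a + b) x := by
  have h_integral : HasDerivAt (fun u => ∫ w, gaussD d b w * gaussD d u (x - w))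
      (∫ w, gaussD d b w * gaussDeriv d a (x - w)) a :=
    hasDerivAt_integral_mul_gaussD (integrable_gaussD hb) (measurable_const_sub x) ha
  have h_semigroup : (fun u => ∫ w, gaussD d b w * gaussD d u (x - w)) =ᶠ[𝓝 a]
      fun u => gaussD d (u + b) x := by
    filter_upwards [Ioi_mem_nhds ha] with u hu
    simpa only [mul_comm] using integral_gaussD_sub_mul_gaussD hu hb x
  have h_deriv : HasDerivAt (fun u => gaussD d (u + b) x) (gaussDeriv d (a + b) x) a :=
    (hasDerivAt_gaussD (add_pos ha hb) x).comp_add_const a b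
  simpa only [mul_comm] using (h_integral.congr_of_eventuallyEq h_semigroup.symm).unique h_deriv

lemma hasDerivAt_gaussDeriv {a b : ℝ} (ha : 0 < a) (hb : 0 < b) (x : EuclideanSpace ℝ (Fin d)) :
    HasDerivAt (fun s => gaussDeriv d s x) (∫ w, gaussDeriv d a (x - w) * gaussDeriv d b w)
      (a + b) := by
  have h_integral : HasDerivAt (fun u => ∫ w, gaussDeriv d a (x - w) * gaussD d u w)
      (∫ w, gaussDeriv d a (x - w) * gaussDeriv d b w) b :=
    hasDerivAt_integral_mul_gaussD ((integrable_gaussDeriv ha).comp_sub_left x) measurable_id hb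
  have h_semigroup : (fun u => ∫ w, gaussDeriv d a (x - w) * gaussD d u w) =ᶠ[𝓝 b]
      fun u => gaussDeriv d (a + u) x := by
    filter_upwards [Ioi_mem_nhds hb] with u hu
    exact integral_gaussDeriv_sub_mul_gaussD ha hu x
  have h_shifted := h_integral.congr_of_eventuallyEq h_semigroup.symm
  rw [← add_sub_cancel_left a b] at h_shifted
  simpa only [add_sub_cancel_left, add_sub_cancel] using h_shifted.comp_sub_const (a + b) a

lemma integrableOn_Ioi_div_sq (C : ℝ) {c : ℝ} (hc : 0 < c) :
    IntegrableOn (fun v : ℝ => (C / v) ^ 2) (Set.Ioi c) := by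
  refine IntegrableOn.congr_fun ((integrableOn_Ioi_rpow_of_lt (a := -2) (by norm_num) hc).const_mul
    (C ^ 2)) (fun v hv => ?_) measurableSet_Ioi
  have hv_pos : 0 < v := hc.trans hv
  norm_num [rpow_neg hv_pos.le, mul_pow, div_eq_mul_inv]

lemma integrableOn_Ioi_integral_gaussDeriv_sub_mul {c : ℝ} (hc : 0 < c)
    (x : EuclideanSpace ℝ (Fin d)) :
    IntegrableOn (fun v => ∫ w, gaussDeriv d v (x - w) * gaussDeriv d v w) (Set.Ioi c) := by
  have hmeas : Measurable fun r : ℝ × EuclideanSpace ℝ (Fin d) =>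
      gaussDeriv d r.1 (x - r.2) * gaussDeriv d r.1 r.2 :=
    (measurable_uncurry_gaussDeriv.comp
      (by fun_prop : Measurable fun r : ℝ × EuclideanSpace ℝ (Fin d) => (r.1, x - r.2))).mul
        measurable_uncurry_gaussDeriv
  refine ((integrableOn_Ioi_div_sq (gaussDerivConst d) hc).mul_const (gaussD d (2 * c) 0)).mono'
    hmeas.stronglyMeasurable.integral_prod_right'.aestronglyMeasurable ?_
  filter_upwards [ae_restrict_mem measurableSet_Ioi] with v hv
  exact norm_integral_gaussDeriv_sub_mul_le hc (le_of_lt hv) x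

lemma gaussDeriv_eq_neg_two_mul_integral {y : ℝ} (hy : 0 < y) (x : EuclideanSpace ℝ (Fin d)) :
    gaussDeriv d y x =
      -2 * ∫ v in Set.Ioi (y / 2), ∫ w, gaussDeriv d v (x - w) * gaussDeriv d v w := by
  have h_deriv : ∀ v ∈ Set.Ici (y / 2), HasDerivAt (fun s => gaussDeriv d (2 * s) x)
      (2 * ∫ w, gaussDeriv d v (x - w) * gaussDeriv d v w) v := fun v hv => by
    have hv_pos : 0 < v := (half_pos hy).trans_le hv
    have h_outer := hasDerivAt_gaussDeriv hv_pos hv_pos x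
    rw [← two_mul] at h_outer
    exact (h_outer.comp v (hasDerivAt_const_mul 2)).congr_deriv (mul_comm _ _)
  have h_tendsto : Tendsto (fun s => gaussDeriv d (2 * s) x) atTop (𝓝 0) :=
    (tendsto_gaussDeriv_atTop x).comp (tendsto_id.const_mul_atTop two_pos)
  have h_ftc := integral_Ioi_of_hasDerivAt_of_tendsto' h_deriv
    ((integrableOn_Ioi_integral_gaussDeriv_sub_mul (half_pos hy) x).const_mul 2) h_tendsto
  rw [integral_const_mul, mul_div_cancel₀ y two_ne_zero] at h_ftc
  linarith

lemma lintegral_Ioi_lintegral_enorm_gaussDeriv_sq_ne_top {c : ℝ} (hc : 0 < c) :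
    ∫⁻ v in Set.Ioi c, (∫⁻ x, ‖gaussDeriv d v x‖ₑ) * (∫⁻ x, ‖gaussDeriv d v x‖ₑ) ≠ ∞ := by
  refine ne_top_of_le_ne_top (integrableOn_Ioi_div_sq (gaussDerivConst d) hc).lintegral_lt_top.ne
    (setLIntegral_mono' measurableSet_Ioi fun v hv => ?_)
  have hv_pos : 0 < v := hc.trans hv
  rw [← ofReal_integral_norm_eq_lintegral_enorm (integrable_gaussDeriv hv_pos), ← sq,
    ← ENNReal.ofReal_pow (by positivity)]
  exact ENNReal.ofReal_le_ofReal
    (pow_le_pow_left₀ (by positivity) (integral_norm_gaussDeriv_le hv_pos) 2)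

end Gaussian

theorem statement7_general {d : ℕ} (μ ν : Measure (EuclideanSpace ℝ (Fin d)))
    [IsFiniteMeasure μ] [IsFiniteMeasure ν] (y : ℝ) (hy : 0 < y) :
    ∫ x, |∫ z, gaussDy d y (x - z) ∂(μ ∗ ν)| ≤
      2 * ∫ v in Set.Ioi (y / 2),
        (∫ x, |∫ z, gaussDy d v (x - z) ∂μ|) * (∫ x, |∫ z, gaussDy d v (x - z) ∂ν|) := by
  let F (x : EuclideanSpace ℝ (Fin d)) : ℝ :=
    ∫ v in Set.Ioi (y / 2), ∫ w, gaussDeriv d v (x - w) * gaussDeriv d v w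
  have hmeas : StronglyMeasurable (uncurry (gaussDeriv d)) :=
    measurable_uncurry_gaussDeriv.stronglyMeasurable
  calc ∫ x, |∫ z, gaussDy d y (x - z) ∂(μ ∗ ν)|
    _ = 2 * ∫ x, ‖measureConv (μ ∗ ν) F x‖ := by
      simp_rw [gaussDy_eq_gaussDeriv hy, gaussDeriv_eq_neg_two_mul_integral hy, integral_const_mul,
        abs_mul, abs_neg, abs_two, integral_const_mul]
      rfl
    _ ≤ 2 * ∫ v in Set.Ioi (y / 2), (∫ x, ‖measureConv μ (gaussDeriv d v) x‖) *
          (∫ x, ‖measureConv ν (gaussDeriv d v) x‖) := by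
      gcongr
      exact integral_norm_measureConv_conv_integral_le hmeas hmeas
        (lintegral_Ioi_lintegral_enorm_gaussDeriv_sq_ne_top (half_pos hy))
    _ = 2 * ∫ v in Set.Ioi (y / 2),
          (∫ x, |∫ z, gaussDy d v (x - z) ∂μ|) * (∫ x, |∫ z, gaussDy d v (x - z) ∂ν|) := by
      congr 1
      refine setIntegral_congr_fun measurableSet_Ioi fun v hv => ?_
      simp only [gaussDy_eq_gaussDeriv ((half_pos hy).trans hv), measureConv, norm_eq_abs]

theorem statement7 {d : ℕ} (μ ν : Measure (EuclideanSpace ℝ (Fin d)))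
    [IsProbabilityMeasure μ] [IsProbabilityMeasure ν] (y : ℝ) (hy : 0 < y) :
    ∫ x, |∫ z, gaussDy d y (x - z) ∂(μ ∗ ν)| ≤
      2 * ∫ v in Set.Ioi (y / 2),
        (∫ x, |∫ z, gaussDy d v (x - z) ∂μ|) * (∫ x, |∫ z, gaussDy d v (x - z) ∂ν|) :=
  statement7_general μ ν y hy
end
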